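/- Let (Ω, 𝒜, μ) be a probability space with a filtration (ℱ_j)_{j∈ℕ}, and let X_1, X_2, … be a sequence of random variables taking values in {0,1} such that X_j is ℱ_j-measurable for each j. Suppose there is a real number p such that for every j ≥ 0 the conditional expectation satisfies E[X_{j+1} | ℱ_j] ≤ p almost everywhere. Write S_n = Σ_{j=1}^n X_j. Then for every δ > 0 and every n ≥ 1, μ({ω : S_n(ω) − n·p ≥ n·δ}) ≤ exp(−n·δ²/2). -/

import Mathlib

/-!
The proof is the exponential-moment (Chernoff) method, with `t = δ`. Since `X ∈ {0, 1}`, the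
function `exp (t X)` equals the affine function `1 + (exp t - 1) X`, so for `t ≥ 0` conditioning on
`ℱ n` and using `E[X (n + 1) | ℱ n] ≤ p` multiplies the exponential moment of the partial sum by at
most `1 + p (exp t - 1)` at each step (`integral_exp_sum_le`). By convexity of `exp` this factor is
at most `exp (t p + t ^ 2 / 2)` (`one_add_mul_exp_sub_one_le`; `p ≥ 0` is automatic, and nothing
forces `p ≤ 1`), and Markov's inequality gives the bound. Only the pull-out property of conditional
expectations is used, because Mathlib's Azuma-Hoeffding inequality goes through conditional
kernels, which require a standard Borel space.
-/

open MeasureTheory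

/-- The chord of `y ↦ exp (t * y)` over `[-1, 1]` lies above its graph. -/
lemma exp_mul_le_cosh_add {t y : ℝ} (h1 : -1 ≤ y) (h2 : y ≤ 1) :
    Real.exp (t * y) ≤ Real.cosh t + y * Real.sinh t := by
  have h := convexOn_exp.2 (Set.mem_univ t) (Set.mem_univ (-t))
    (show 0 ≤ (1 + y) / 2 by linarith) (show 0 ≤ (1 - y) / 2 by linarith) (by ring)
  simp only [smul_eq_mul] at h
  rw [show (1 + y) / 2 * t + (1 - y) / 2 * -t = t * y by ring] at h
  rw [Real.cosh_eq, Real.sinh_eq]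
  linarith

/-- Bound on the Bernoulli moment generating function. For `p ≤ 1` it is Hoeffding's lemma with the
constant `1 / 2` in place of `1 / 8`; for `p ≥ 1` it is Bernoulli's inequality. -/
lemma one_add_mul_exp_sub_one_le {p t : ℝ} (hp : 0 ≤ p) :
    1 + p * (Real.exp t - 1) ≤ Real.exp (t * p + t ^ 2 / 2) := by
  rcases le_total p 1 with hp1 | hp1
  · have h1 := mul_le_mul_of_nonneg_left
      (exp_mul_le_cosh_add (t := t) (y := 1 - p) (by linarith) (by linarith)) hp
    have h2 := mul_le_mul_of_nonneg_left
      (exp_mul_le_cosh_add (t := t) (y := -p) (by linarith) (by linarith)) (sub_nonneg.2 hp1)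
    -- The centred Bernoulli variable has mean zero, so the `sinh` terms of the chords cancel.
    have h3 : p * Real.exp (t * (1 - p)) + (1 - p) * Real.exp (t * -p) ≤ Real.exp (t ^ 2 / 2) := by
      have := Real.cosh_le_exp_half_sq t
      linarith
    calc 1 + p * (Real.exp t - 1)
        = Real.exp (t * p) * (p * Real.exp (t * (1 - p)) + (1 - p) * Real.exp (t * -p)) := by
          have e1 : Real.exp (t * p) * Real.exp (t * (1 - p)) = Real.exp t := by
            rw [← Real.exp_add]; ring_nf
          have e2 : Real.exp (t * p) * Real.exp (t * -p) = 1 := by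
            rw [← Real.exp_add]; ring_nf; exact Real.exp_zero
          linear_combination (-p) * e1 - (1 - p) * e2
      _ ≤ Real.exp (t * p) * Real.exp (t ^ 2 / 2) := by gcongr
      _ = _ := (Real.exp_add _ _).symm
  · have h := one_add_mul_self_le_rpow_one_add
      (show -1 ≤ Real.exp t - 1 by linarith [Real.exp_pos t]) hp1
    rw [add_sub_cancel, ← Real.exp_mul] at h
    exact h.trans (Real.exp_le_exp.2 (by linarith [sq_nonneg t]))

section

variable {Ω : Type*} {m0 : MeasurableSpace Ω} {μ : Measure Ω} [IsProbabilityMeasure μ]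
  {ℱ : Filtration ℕ m0} {X : ℕ → Ω → ℝ}

lemma measurable_exp_sum (hXmeas : ∀ j, Measurable[ℱ j] (X j)) (t : ℝ) (n : ℕ) :
    Measurable[ℱ n] fun ω => Real.exp (t * ∑ j ∈ Finset.Icc 1 n, X j ω) := by
  refine Real.measurable_exp.comp (Measurable.const_mul ?_ t)
  refine Finset.measurable_fun_sum _ fun j hj => ?_
  exact (hXmeas j).mono (ℱ.mono (Finset.mem_Icc.1 hj).2) le_rfl

lemma integrable_exp_sum (hX01 : ∀ j ω, X j ω = 0 ∨ X j ω = 1)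
    (hXmeas : ∀ j, Measurable[ℱ j] (X j)) {t : ℝ} (ht : 0 ≤ t) (n : ℕ) :
    Integrable (fun ω => Real.exp (t * ∑ j ∈ Finset.Icc 1 n, X j ω)) μ := by
  refine Integrable.of_bound
    ((measurable_exp_sum hXmeas t n).mono (ℱ.le n) le_rfl).aestronglyMeasurable
    (Real.exp (t * n)) (ae_of_all _ fun ω => ?_)
  rw [Real.norm_eq_abs, Real.abs_exp]
  gcongr
  calc ∑ j ∈ Finset.Icc 1 n, X j ω ≤ ∑ j ∈ Finset.Icc 1 n, (1 : ℝ) :=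
        Finset.sum_le_sum fun j _ => by rcases hX01 j ω with h | h <;> simp [h]
    _ = n := by simp

/-- One step of the filtration multiplies the exponential moment by at most
`1 + p * (exp t - 1)`. -/
lemma integral_exp_sum_le (hX01 : ∀ j ω, X j ω = 0 ∨ X j ω = 1)
    (hXmeas : ∀ j, Measurable[ℱ j] (X j)) {p : ℝ} (hp0 : 0 ≤ p)
    (hp : ∀ j : ℕ, μ[X (j + 1)|ℱ j] ≤ᵐ[μ] fun _ => p) {t : ℝ} (ht : 0 ≤ t) (n : ℕ) :
    ∫ ω, Real.exp (t * ∑ j ∈ Finset.Icc 1 n, X j ω) ∂μ ≤ (1 + p * (Real.exp t - 1)) ^ n := by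
  have het : 0 ≤ Real.exp t - 1 := by linarith [Real.one_le_exp ht]
  induction n with
  | zero => simp
  | succ n ih =>
    set Z : Ω → ℝ := fun ω => Real.exp (t * ∑ j ∈ Finset.Icc 1 n, X j ω) with hZ
    have hZint : Integrable Z μ := integrable_exp_sum hX01 hXmeas ht n
    have hZm : StronglyMeasurable[ℱ n] Z := (measurable_exp_sum hXmeas t n).stronglyMeasurable
    have hXm : AEStronglyMeasurable (X (n + 1)) μ :=
      ((hXmeas (n + 1)).mono (ℱ.le _) le_rfl).aestronglyMeasurable
    have hXb : ∀ ω, ‖X (n + 1) ω‖ ≤ 1 := fun ω => by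
      rcases hX01 (n + 1) ω with h | h <;> simp [h]
    have hXint : Integrable (X (n + 1)) μ := Integrable.of_bound hXm 1 (ae_of_all _ hXb)
    have hZX : Integrable (Z * X (n + 1)) μ := hZint.mul_bdd hXm (ae_of_all _ hXb)
    have hpull := condExp_mul_of_stronglyMeasurable_left hZm hZX hXint
    have key : ∫ ω, (Z * X (n + 1)) ω ∂μ ≤ p * ∫ ω, Z ω ∂μ := by
      rw [← integral_condExp (ℱ.le n), ← integral_const_mul]
      refine integral_mono_ae integrable_condExp (hZint.const_mul p) ?_
      filter_upwards [hpull, hp n] with ω h1 h2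
      rw [h1, Pi.mul_apply, mul_comm p]
      exact mul_le_mul_of_nonneg_left h2 (Real.exp_pos _).le
    -- On `{0, 1}` the exponential agrees with an affine function.
    have hstep : ∀ ω, Real.exp (t * ∑ j ∈ Finset.Icc 1 (n + 1), X j ω)
        = Z ω + (Real.exp t - 1) * (Z * X (n + 1)) ω := fun ω => by
      rw [Finset.sum_Icc_succ_top (by omega), mul_add, Real.exp_add, Pi.mul_apply]
      rcases hX01 (n + 1) ω with h | h
      · simp [h, hZ]
      · simp only [h, hZ, mul_one]; ring
    simp_rw [hstep]
    rw [integral_add hZint (hZX.const_mul _), integral_const_mul]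
    calc ∫ ω, Z ω ∂μ + (Real.exp t - 1) * ∫ ω, (Z * X (n + 1)) ω ∂μ
        ≤ ∫ ω, Z ω ∂μ + (Real.exp t - 1) * (p * ∫ ω, Z ω ∂μ) := by gcongr
      _ = (∫ ω, Z ω ∂μ) * (1 + p * (Real.exp t - 1)) := by ring
      _ ≤ (1 + p * (Real.exp t - 1)) ^ n * (1 + p * (Real.exp t - 1)) := by gcongr
      _ = _ := (pow_succ _ _).symm

end

/-- **Azuma-type bound.** If `X_1, X_2, …` are `{0,1}`-valued random variables
adapted to a filtration `(ℱ_j)` with `E[X_{j+1} | ℱ_j] ≤ p` a.e. for all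
`j ≥ 0`, and `S_n = ∑_{j=1}^n X_j`, then for every `δ > 0` and `n ≥ 1`,
`μ(S_n − n p ≥ n δ) ≤ exp(−n δ²/2)`. -/
theorem azuma_bound {Ω : Type*} {m0 : MeasurableSpace Ω}
    {μ : Measure Ω} [IsProbabilityMeasure μ] (ℱ : Filtration ℕ m0)
    (X : ℕ → Ω → ℝ) (hX01 : ∀ j ω, X j ω = 0 ∨ X j ω = 1)
    (hXmeas : ∀ j, Measurable[ℱ j] (X j))
    (p : ℝ) (hp : ∀ j : ℕ, μ[X (j + 1)|ℱ j] ≤ᵐ[μ] fun _ => p) :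
    ∀ δ : ℝ, 0 < δ → ∀ n : ℕ, 1 ≤ n →
      μ {ω | (∑ j ∈ Finset.Icc 1 n, X j ω) - (n : ℝ) * p ≥ (n : ℝ) * δ} ≤
        ENNReal.ofReal (Real.exp (-((n : ℝ) * δ ^ 2) / 2)) := by
  intro δ hδ n _
  have hp0 : 0 ≤ p := by
    have h0 : 0 ≤ᵐ[μ] μ[X 1|ℱ 0] := condExp_nonneg (ae_of_all _ fun ω => by
      rcases hX01 1 ω with h | h <;> simp [h])
    obtain ⟨ω, h1, h2⟩ := (h0.and (hp 0)).exists
    exact h1.trans h2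
  have hset : {ω | (∑ j ∈ Finset.Icc 1 n, X j ω) - (n : ℝ) * p ≥ (n : ℝ) * δ}
      = {ω | (n : ℝ) * (p + δ) ≤ ∑ j ∈ Finset.Icc 1 n, X j ω} := by
    ext ω
    simp only [Set.mem_ofPred_eq, ge_iff_le, mul_add]
    constructor <;> intro h <;> linarith
  rw [hset, ← ofReal_measureReal]
  refine ENNReal.ofReal_le_ofReal ?_
  have hbase : 0 ≤ 1 + p * (Real.exp δ - 1) := by
    have : 0 ≤ Real.exp δ - 1 := by linarith [Real.one_le_exp hδ.le]
    positivity
  -- `t = δ` minimises the exponent `n * (t ^ 2 / 2 - t * δ)`.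
  calc μ.real {ω | (n : ℝ) * (p + δ) ≤ ∑ j ∈ Finset.Icc 1 n, X j ω}
      ≤ Real.exp (-δ * (n * (p + δ))) *
          ∫ ω, Real.exp (δ * ∑ j ∈ Finset.Icc 1 n, X j ω) ∂μ :=
        ProbabilityTheory.measure_ge_le_exp_mul_mgf _ hδ.le
          (integrable_exp_sum hX01 hXmeas hδ.le n)
    _ ≤ Real.exp (-δ * (n * (p + δ))) * Real.exp (δ * p + δ ^ 2 / 2) ^ n := by
        gcongr
        exact (integral_exp_sum_le hX01 hXmeas hp0 hp hδ.le n).trans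
          (pow_le_pow_left₀ hbase (one_add_mul_exp_sub_one_le hp0) n)
    _ = Real.exp (-((n : ℝ) * δ ^ 2) / 2) := by
        rw [← Real.exp_nat_mul, ← Real.exp_add]
        ring_nf
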